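/- arXiv:math/9906132 — 2 statements merged into one kernel-verified Lean document; each statement's English description precedes it below -/
import Mathlib

section
/- Let n ≥ 2 be an integer and let q be a squarefree positive integer. Then the series ∑_{m} ∏_{p | m} 1/(p^{2n} − 2p^n), where m runs over squarefree positive integers coprime to q and the product is over primes p dividing m, converges absolutely, and ξ(n) · (∏_{p | q} 1/(p^{2n} − 2p^n)) · ∑_{m squarefree, gcd(m,q)=1} ∏_{p | m} 1/(p^{2n} − 2p^n) = (1/ζ(n)²) · ∏_{p | q} 1/(p^n − 1)², where all products over p | q and p | m are over the primes dividing q and m respectively. -/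
/-!
Everything is an Euler product. Write `x = pⁿ ≥ 4`. The summand is at most `1/mⁿ`, because
`x² - 2x ≥ x`, so the series over squarefree `m` coprime to `q` converges absolutely and its sum is
`∏_{p ∤ q} (1 + 1/(x² - 2x))`. The product `ξ(n) · (sum) · ζ(n)²` is then a product over all primes,
whose factor at `p ∤ q` is `(1 - 2/x)(1 + 1/(x² - 2x))(1 - 1/x)⁻² = 1` and at `p ∣ q` is
`(1 - 2/x)(1 - 1/x)⁻²`. Only the finitely many primes dividing `q` contribute, and
`(1 - 2/x)(1 - 1/x)⁻² / (x² - 2x) = 1/(x - 1)²`.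
-/

/-- `ξ(n) = ∏_p (1 − 2/pⁿ)`, the product running over all primes. -/
noncomputable def xiN (n : ℕ) : ℝ := ∏' p : Nat.Primes, (1 - 2 / ((p : ℕ) : ℝ) ^ n)

/-- The Riemann zeta function at an integer argument `n`, as the Dirichlet series
`ζ(n) = ∑_{m ≥ 1} 1/mⁿ`. -/
noncomputable def zetaNat (n : ℕ) : ℝ := ∑' m : ℕ+, (1 : ℝ) / ((m : ℕ) : ℝ) ^ n

lemma four_le_prime_pow {n p : ℕ} (hn : 2 ≤ n) (hp : p.Prime) : (4 : ℝ) ≤ (p : ℝ) ^ n := by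
  have h2 : (2 : ℝ) ≤ p := by exact_mod_cast hp.two_le
  calc (4 : ℝ) = 2 ^ 2 := by norm_num
    _ ≤ 2 ^ n := pow_le_pow_right₀ (by norm_num) hn
    _ ≤ (p : ℝ) ^ n := pow_le_pow_left₀ (by norm_num) h2 n

lemma zetaNat_pos {n : ℕ} (hn : 2 ≤ n) : 0 < zetaNat n := by
  have hs : Summable fun m : ℕ => (1 : ℝ) / (m : ℝ) ^ n :=
    Real.summable_one_div_nat_pow.mpr (by omega)
  exact (hs.comp_injective PNat.coe_injective).tsum_pos
    (fun m => one_div_nonneg.mpr (by positivity)) 1 (by simp)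

lemma hasProd_zetaNat {n : ℕ} (hn : 2 ≤ n) :
    HasProd (fun p : Nat.Primes => (1 - 1 / ((p : ℕ) : ℝ) ^ n)⁻¹) (zetaNat n) := by
  let f : ℕ →*₀ ℝ :=
    { toFun := fun m => 1 / (m : ℝ) ^ n
      map_zero' := by simp [show n ≠ 0 by omega]
      map_one' := by simp
      map_mul' := fun a b => by push_cast; rw [mul_pow, one_div_mul_one_div] }
  have hs : Summable f := Real.summable_one_div_nat_pow.mpr (by omega)
  have h := EulerProduct.eulerProduct_completely_multiplicative_hasProd (f := f) hs.norm
  have hz : zetaNat n = ∑' m, f m := by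
    have h0 := tsum_zero_pnat_eq_tsum_nat hs
    rw [map_zero, zero_add] at h0
    exact h0
  rw [hz]
  exact h

lemma hasProd_xiN {n : ℕ} (hn : 2 ≤ n) :
    HasProd (fun p : Nat.Primes => 1 - 2 / ((p : ℕ) : ℝ) ^ n) (xiN n) := by
  have hs : Summable fun m : ℕ => (1 : ℝ) / (m : ℝ) ^ n :=
    Real.summable_one_div_nat_pow.mpr (by omega)
  have hs' : Summable fun p : Nat.Primes => ‖-(2 / ((p : ℕ) : ℝ) ^ n)‖ := by
    refine (((hs.comp_injective Nat.Primes.coe_nat_injective).mul_left 2).neg.norm).congr ?_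
    intro p
    simp [div_eq_mul_inv]
  have h := (multipliable_one_add_of_summable hs').hasProd
  simpa only [xiN, sub_eq_add_neg] using h

/-- The summand of the series, extended by zero to all natural numbers. -/
noncomputable def coprimeTerm (n q : ℕ) : ℕ → ℝ :=
  Set.indicator {m : ℕ | Squarefree m ∧ Nat.Coprime m q} fun m =>
    ∏ p ∈ m.primeFactors, (1 / ((p : ℝ) ^ (2 * n) - 2 * (p : ℝ) ^ n))

/-- Since `x² - 2x ≥ x` for `x = pⁿ ≥ 4`, the summand is dominated by `1/mⁿ`. -/
lemma coprimeTerm_bound {n : ℕ} (hn : 2 ≤ n) (q m : ℕ) :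
    ‖coprimeTerm n q m‖ ≤ 1 / (m : ℝ) ^ n := by
  by_cases hm : m ∈ {m : ℕ | Squarefree m ∧ Nat.Coprime m q}
  · rw [coprimeTerm, Set.indicator_of_mem hm, norm_prod]
    have hm' : (1 : ℝ) / (m : ℝ) ^ n = ∏ p ∈ m.primeFactors, 1 / (p : ℝ) ^ n := by
      conv_lhs => rw [← Nat.prod_primeFactors_of_squarefree hm.1]
      push_cast
      simp [Finset.prod_pow]
    rw [hm']
    refine Finset.prod_le_prod (fun _ _ => norm_nonneg _) fun p hp => ?_
    have h4 := four_le_prime_pow hn (Nat.prime_of_mem_primeFactors hp)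
    have hle : (p : ℝ) ^ n ≤ (p : ℝ) ^ (2 * n) - 2 * (p : ℝ) ^ n := by
      rw [mul_comm 2 n, pow_mul]
      nlinarith
    rw [Real.norm_of_nonneg (one_div_nonneg.mpr (by linarith))]
    exact one_div_le_one_div_of_le (by linarith) hle
  · rw [coprimeTerm, Set.indicator_of_notMem hm, norm_zero]
    positivity

lemma summable_coprimeTerm {n : ℕ} (hn : 2 ≤ n) (q : ℕ) : Summable (coprimeTerm n q) :=
  .of_norm_bounded (Real.summable_one_div_nat_pow.mpr (by omega)) (coprimeTerm_bound hn q)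

lemma coprimeTerm_mul (n q : ℕ) {a b : ℕ} (hab : a.Coprime b) :
    coprimeTerm n q (a * b) = coprimeTerm n q a * coprimeTerm n q b := by
  simp only [coprimeTerm, Set.indicator_apply, Set.mem_ofPred_eq, Nat.squarefree_mul hab,
    Nat.coprime_mul_iff_left, hab.primeFactors_mul,
    Finset.prod_union hab.disjoint_primeFactors]
  split_ifs <;> first | tauto | simp

/-- The series over powers of `p`: only the exponents `0` and, if `p ∤ q`, `1` contribute. -/
lemma tsum_coprimeTerm_prime_pow (n q : ℕ) {p : ℕ} (hp : p.Prime) :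
    ∑' e, coprimeTerm n q (p ^ e) =
      if p ∣ q then 1 else 1 + 1 / ((p : ℝ) ^ (2 * n) - 2 * (p : ℝ) ^ n) := by
  rw [tsum_eq_sum (s := Finset.range 2)]
  · simp only [Finset.sum_range_succ, Finset.sum_range_zero, pow_zero, pow_one, zero_add,
      coprimeTerm, Set.indicator_apply, Set.mem_ofPred_eq, hp.primeFactors,
      hp.coprime_iff_not_dvd, hp.squarefree, Finset.prod_singleton]
    split_ifs <;> simp_all
  · intro e he
    refine Set.indicator_of_notMem (fun h => he ?_) _
    rcases eq_or_ne e 0 with rfl | h0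
    · simp
    · have h1 := (Nat.squarefree_pow_iff hp.ne_one h0).mp h.1
      simp [h1.2]

lemma hasProd_coprimeTerm {n : ℕ} (hn : 2 ≤ n) (q : ℕ) :
    HasProd (fun p : Nat.Primes => if (p : ℕ) ∣ q then (1 : ℝ) else
      1 + 1 / (((p : ℕ) : ℝ) ^ (2 * n) - 2 * ((p : ℕ) : ℝ) ^ n)) (∑' m, coprimeTerm n q m) := by
  have h := EulerProduct.eulerProduct_hasProd (f := coprimeTerm n q) (by simp [coprimeTerm])
    (coprimeTerm_mul n q) (summable_coprimeTerm hn q).norm (by simp [coprimeTerm])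
  exact h.congr_fun fun p => (tsum_coprimeTerm_prime_pow n q p.2).symm

/-- All factors of the combined Euler product at primes not dividing `q` are trivial. -/
lemma xiN_mul_tsum_mul_zetaNat_sq {n : ℕ} (hn : 2 ≤ n) {q : ℕ} (hq : q ≠ 0) :
    xiN n * (∑' m, coprimeTerm n q m) * (zetaNat n * zetaNat n) =
      ∏ p ∈ q.primeFactors, ((1 - 2 / (p : ℝ) ^ n) *
        ((1 - 1 / (p : ℝ) ^ n)⁻¹ * (1 - 1 / (p : ℝ) ^ n)⁻¹)) := by
  have h := ((hasProd_xiN hn).mul (hasProd_coprimeTerm hn q)).mul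
    ((hasProd_zetaNat hn).mul (hasProd_zetaNat hn))
  refine h.unique ?_
  rw [← Finset.prod_subtype_of_mem (p := Nat.Prime) _
    fun p hp => Nat.prime_of_mem_primeFactors hp]
  have hfin := hasProd_prod_of_ne_finset_one (L := .unconditional _)
    (s := q.primeFactors.subtype Nat.Prime)
    (f := fun p : Nat.Primes => ((1 - 2 / ((p : ℕ) : ℝ) ^ n) * (if (p : ℕ) ∣ q then (1 : ℝ) else
      1 + 1 / (((p : ℕ) : ℝ) ^ (2 * n) - 2 * ((p : ℕ) : ℝ) ^ n))) *
        ((1 - 1 / ((p : ℕ) : ℝ) ^ n)⁻¹ * (1 - 1 / ((p : ℕ) : ℝ) ^ n)⁻¹)) ?_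
  · convert hfin using 1
    refine Finset.prod_congr rfl fun p hp => ?_
    rw [if_pos (Nat.dvd_of_mem_primeFactors (Finset.mem_subtype.mp hp)), mul_one]
  · intro p hp
    have hpq : ¬ (p : ℕ) ∣ q := fun hd =>
      hp (Finset.mem_subtype.mpr (Nat.mem_primeFactors.mpr ⟨p.2, hd, hq⟩))
    have h4 := four_le_prime_pow hn p.2
    rw [if_neg hpq, mul_comm 2 n, pow_mul]
    generalize ((p : ℕ) : ℝ) ^ n = x at h4
    have h0 : x ≠ 0 := by linarith
    have h1 : x - 1 ≠ 0 := by linarith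
    have h2 : x - 2 ≠ 0 := by linarith
    have h3 : x ^ 2 - 2 * x = x * (x - 2) := by ring
    rw [h3, one_sub_div h0]
    field_simp
    ring

/-- For `n ≥ 2` and squarefree `q`, the series `∑_m ∏_{p | m} 1/(p^{2n} − 2pⁿ)` over
squarefree `m` coprime to `q` converges absolutely, and
`ξ(n) · ∏_{p|q} 1/(p^{2n} − 2pⁿ) · ∑_m ∏_{p|m} 1/(p^{2n} − 2pⁿ)
  = (1/ζ(n)²) · ∏_{p|q} 1/(pⁿ − 1)²`. -/
theorem stmt_12 (n : ℕ) (hn : 2 ≤ n) (q : ℕ) (hq : Squarefree q) :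
    Summable (fun m : {m : ℕ // Squarefree m ∧ Nat.Coprime m q} =>
        ∏ p ∈ (m : ℕ).primeFactors, (1 / ((p : ℝ) ^ (2 * n) - 2 * (p : ℝ) ^ n))) ∧
    xiN n * (∏ p ∈ q.primeFactors, (1 / ((p : ℝ) ^ (2 * n) - 2 * (p : ℝ) ^ n)))
        * (∑' m : {m : ℕ // Squarefree m ∧ Nat.Coprime m q},
            ∏ p ∈ (m : ℕ).primeFactors, (1 / ((p : ℝ) ^ (2 * n) - 2 * (p : ℝ) ^ n)))
      = (1 / zetaNat n ^ 2) * ∏ p ∈ q.primeFactors, (1 / ((p : ℝ) ^ n - 1) ^ 2) := by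
  refine ⟨summable_subtype_iff_indicator.mpr (summable_coprimeTerm hn q), ?_⟩
  have hT : (∑' m : {m : ℕ // Squarefree m ∧ Nat.Coprime m q},
      ∏ p ∈ (m : ℕ).primeFactors, (1 / ((p : ℝ) ^ (2 * n) - 2 * (p : ℝ) ^ n))) =
      ∑' m, coprimeTerm n q m :=
    tsum_subtype {m : ℕ | Squarefree m ∧ Nat.Coprime m q} fun m =>
      ∏ p ∈ m.primeFactors, (1 / ((p : ℝ) ^ (2 * n) - 2 * (p : ℝ) ^ n))
  have hz := (zetaNat_pos hn).ne'
  have key := xiN_mul_tsum_mul_zetaNat_sq hn hq.ne_zero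
  have hloc : (∏ p ∈ q.primeFactors, (1 / ((p : ℝ) ^ (2 * n) - 2 * (p : ℝ) ^ n))) *
      ∏ p ∈ q.primeFactors, ((1 - 2 / (p : ℝ) ^ n) *
        ((1 - 1 / (p : ℝ) ^ n)⁻¹ * (1 - 1 / (p : ℝ) ^ n)⁻¹)) =
      ∏ p ∈ q.primeFactors, (1 / ((p : ℝ) ^ n - 1) ^ 2) := by
    rw [← Finset.prod_mul_distrib]
    refine Finset.prod_congr rfl fun p hp => ?_
    have h4 := four_le_prime_pow hn (Nat.prime_of_mem_primeFactors hp)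
    rw [mul_comm 2 n, pow_mul]
    generalize (p : ℝ) ^ n = x at h4
    have h0 : x ≠ 0 := by linarith
    have h1 : x - 1 ≠ 0 := by linarith
    have h2 : x - 2 ≠ 0 := by linarith
    have h3 : x ^ 2 - 2 * x = x * (x - 2) := by ring
    rw [h3, one_sub_div h0, one_sub_div h0]
    field_simp
  rw [hT, ← hloc, ← key]
  field_simp
end

section
/- Let n ≥ 2 be an integer and let c be a positive integer. Then ∑_{d | c, d squarefree} (1/d^n) · ∏_{p ∤ d} (1 − 2/p^n) = ξ(n) · ∏_{p | c} (1 + 1/(p^n − 2)), where the sum is over squarefree positive divisors d of c, the inner (absolutely convergent) product is over all primes p not dividing d, and the product on the right is over primes p dividing c. -/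
lemma two_lt_prime_pow {n : ℕ} (hn : 2 ≤ n) {p : ℕ} (hp : p.Prime) : (2 : ℝ) < (p : ℝ) ^ n := by
  have h : 2 ^ 2 ≤ p ^ n :=
    (Nat.pow_le_pow_left hp.two_le 2).trans (Nat.pow_le_pow_right hp.pos hn)
  exact_mod_cast (by omega : 2 < p ^ n)

lemma multipliable_euler {n : ℕ} (hn : 2 ≤ n) (s : Set Nat.Primes) :
    Multipliable (fun p : s => (1 - 2 / (((p : Nat.Primes) : ℕ) : ℝ) ^ n)) := by
  have h1 : Summable (fun k : ℕ => -2 * (1 / (k : ℝ) ^ n)) :=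
    (Real.summable_one_div_nat_pow.mpr (by omega)).mul_left _
  have h2 := (h1.comp_injective (i := fun p : Nat.Primes => (p : ℕ)) Subtype.val_injective).subtype s
  refine (Real.multipliable_one_add_of_summable h2).congr fun p => ?_
  simp only [Function.comp_apply]
  ring

/-- The finitely many factors at the primes dividing `d` split off from `ξ(n)`. -/
lemma prod_mul_tprod_not_dvd {n : ℕ} (hn : 2 ≤ n) {d : ℕ} (hd : d ≠ 0) :
    (∏ p ∈ d.primeFactors, (1 - 2 / (p : ℝ) ^ n)) *
      ∏' p : {p : Nat.Primes // ¬ ((p : ℕ) ∣ d)}, (1 - 2 / (((p : Nat.Primes) : ℕ) : ℝ) ^ n)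
      = xiN n := by
  set S : Finset Nat.Primes := d.primeFactors.subtype Nat.Prime with hS
  have hset : {p : Nat.Primes | (p : ℕ) ∣ d} = (S : Set Nat.Primes) := by
    ext p
    have hp : (p : ℕ).Prime := p.2
    change (p : ℕ) ∣ d ↔ p ∈ S
    have hmem : p ∈ S ↔ (p : ℕ) ∈ d.primeFactors := Finset.mem_subtype (p := Nat.Prime)
    rw [hmem, Nat.mem_primeFactors]
    exact ⟨fun h => ⟨hp, h, hd⟩, fun h => h.2.1⟩
  have key := Multipliable.tprod_mul_tprod_compl
    (f := fun p : Nat.Primes => (1 - 2 / ((p : ℕ) : ℝ) ^ n))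
    (multipliable_euler hn {p : Nat.Primes | (p : ℕ) ∣ d}) (multipliable_euler hn _)
  have hfin : ∏' p : {p : Nat.Primes | (p : ℕ) ∣ d}, (1 - 2 / (((p : Nat.Primes) : ℕ) : ℝ) ^ n)
      = ∏ p ∈ d.primeFactors, (1 - 2 / (p : ℝ) ^ n) := by
    rw [hset]
    refine (Finset.tprod_subtype' S
      (fun p : Nat.Primes => (1 - 2 / ((p : ℕ) : ℝ) ^ n))).trans ?_
    exact Finset.prod_subtype_of_mem (p := Nat.Prime) (fun p : ℕ => (1 - 2 / (p : ℝ) ^ n))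
      fun p hp => Nat.prime_of_mem_primeFactors hp
  rw [hfin] at key
  exact key

/-- For `n ≥ 2` and `c ≥ 1`,
`∑_{d | c, d squarefree} (1/dⁿ) ∏_{p ∤ d} (1 − 2/pⁿ) = ξ(n) ∏_{p | c} (1 + 1/(pⁿ − 2))`,
where the inner (absolutely convergent) product runs over all primes not dividing `d`. -/
theorem stmt_15 (n : ℕ) (hn : 2 ≤ n) (c : ℕ) (hc : 0 < c) :
    (∀ d : ℕ, Multipliable (fun p : {p : Nat.Primes // ¬ ((p : ℕ) ∣ d)} =>
        (1 - 2 / (((p : Nat.Primes) : ℕ) : ℝ) ^ n))) ∧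
    ∑ d ∈ c.divisors.filter Squarefree,
        (1 / (d : ℝ) ^ n) *
          ∏' p : {p : Nat.Primes // ¬ ((p : ℕ) ∣ d)},
            (1 - 2 / (((p : Nat.Primes) : ℕ) : ℝ) ^ n)
      = xiN n * ∏ p ∈ c.primeFactors, (1 + 1 / ((p : ℝ) ^ n - 2)) := by
  refine ⟨fun d => multipliable_euler hn {p : Nat.Primes | ¬ ((p : ℕ) ∣ d)}, ?_⟩
  have hfac : (UniqueFactorizationMonoid.normalizedFactors c).toFinset = c.primeFactors := by
    rw [Nat.factors_eq]
    rfl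
  rw [Nat.sum_divisors_filter_squarefree hc.ne', hfac, Finset.prod_one_add, Finset.mul_sum]
  refine Finset.sum_congr rfl fun t ht => ?_
  have htp : ∀ p ∈ t, p.Prime := fun p hp =>
    Nat.prime_of_mem_primeFactors (Finset.mem_powerset.mp ht hp)
  have hval : t.val.prod = ∏ p ∈ t, p := by simp
  have hd : (∏ p ∈ t, p) ≠ 0 := Finset.prod_ne_zero_iff.mpr fun p hp => (htp p hp).ne_zero
  rw [hval, ← prod_mul_tprod_not_dvd hn hd, Nat.primeFactors_prod htp, mul_right_comm]
  congr 1
  rw [Nat.cast_prod, ← Finset.prod_pow, one_div, ← Finset.prod_inv_distrib,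
    ← Finset.prod_mul_distrib]
  refine Finset.prod_congr rfl fun p hp => ?_
  have h2 := two_lt_prime_pow hn (htp p hp)
  have h3 : (p : ℝ) ^ n ≠ 0 := by linarith
  have h4 : (p : ℝ) ^ n - 2 ≠ 0 := by linarith
  field_simp
end
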